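/- Let a = (4/π)·𝒦(1/√2)² and b = a/2. The function g(K) = (1/(K−1))·log(λ(K)·exp(b·(1/K − K))) is strictly increasing on (1, ∞); moreover g(K) → 0 as K → 1⁺ and g(K) → π − b as K → ∞, so g maps (1, ∞) onto (0, π − b). -/

import Mathlib

open Set Filter

/-- Complete elliptic integral of the first kind. -/
noncomputable def ellK (r : ℝ) : ℝ :=
  ∫ θ in (0:ℝ)..(Real.pi / 2), (1 - r ^ 2 * Real.sin θ ^ 2) ^ (-(1/2) : ℝ)

/-- The Grötzsch modulus μ(r) = (π/2)·𝒦'(r)/𝒦(r). -/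
noncomputable def mu (r : ℝ) : ℝ :=
  Real.pi / 2 * ellK (Real.sqrt (1 - r ^ 2)) / ellK r

open Real in
lemma base_pos {m : ℝ} (hm : m < 1) (θ : ℝ) : 0 < 1 - m * sin θ ^ 2 := by
  have h1 := sin_sq_le_one θ
  have h2 := sq_nonneg (sin θ)
  rcases le_total m 0 with h | h
  · nlinarith
  · nlinarith

lemma cont_J {m : ℝ} (hm : m < 1) (w : ℝ → ℝ) (hw : Continuous w) (s : ℝ) :
    Continuous fun θ => w θ * (1 - m * Real.sin θ ^ 2) ^ s := by
  apply hw.mul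
  apply Continuous.rpow_const (by fun_prop)
  intro θ
  left
  exact (base_pos hm θ).ne'

lemma deriv_J {m : ℝ} (hm : m < 1) (w : ℝ → ℝ) (hw : Continuous w) (hw1 : ∀ θ, |w θ| ≤ 1)
    (s : ℝ) (hs : s < 0) :
    HasDerivAt (fun x => ∫ θ in (0:ℝ)..(Real.pi / 2), w θ * (1 - x * Real.sin θ ^ 2) ^ s)
      (∫ θ in (0:ℝ)..(Real.pi / 2), (w θ * (-s * Real.sin θ ^ 2)) * (1 - m * Real.sin θ ^ 2) ^ (s - 1)) m := by
  set m1 : ℝ := (max m 0 + 1) / 2 with hm1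
  have h0 : max m 0 < 1 := max_lt hm one_pos
  have hm1' : m1 < 1 := by linarith
  have hmm : m < m1 := by linarith [le_max_left m 0]
  have hm0 : 0 ≤ m1 := by linarith [le_max_right m 0]
  refine (intervalIntegral.hasDerivAt_integral_of_dominated_loc_of_deriv_le
    (F := fun x θ => w θ * (1 - x * Real.sin θ ^ 2) ^ s)
    (F' := fun x θ => (w θ * (-s * Real.sin θ ^ 2)) * (1 - x * Real.sin θ ^ 2) ^ (s - 1))
    (s := Set.Iio m1) (bound := fun _ => (-s) * (1 - m1) ^ (s - 1)) (Iio_mem_nhds hmm) ?_ ?_ ?_ ?_ ?_ ?_).2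
  · filter_upwards [Iio_mem_nhds hm] with x hx
    exact (cont_J hx w hw s).aestronglyMeasurable
  · exact (cont_J hm w hw s).intervalIntegrable _ _
  · exact (cont_J hm (fun θ => w θ * (-s * Real.sin θ ^ 2)) (by fun_prop) (s-1)).aestronglyMeasurable
  · refine Filter.Eventually.of_forall fun θ _ x hx => ?_
    have hx' : x < m1 := hx
    have h1 := Real.sin_sq_le_one θ
    have h2 := sq_nonneg (Real.sin θ)
    have hb : 1 - m1 ≤ 1 - x * Real.sin θ ^ 2 := by nlinarith
    have hp := Real.rpow_le_rpow_of_nonpos (by linarith) hb (by linarith : s - 1 ≤ 0)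
    have hpos : 0 < (1 - x * Real.sin θ ^ 2) ^ (s - 1) := Real.rpow_pos_of_pos (by linarith) _
    rw [norm_mul, norm_mul, Real.norm_eq_abs, Real.norm_eq_abs, Real.norm_eq_abs, abs_of_pos hpos]
    apply mul_le_mul _ hp hpos.le (by linarith)
    rw [abs_of_nonneg (by nlinarith : 0 ≤ -s * Real.sin θ ^ 2)]
    have := hw1 θ
    have := abs_nonneg (w θ)
    have h3 : -s * Real.sin θ ^ 2 ≤ -s := by nlinarith
    have h4 : 0 ≤ -s * Real.sin θ ^ 2 := by nlinarith
    nlinarith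
  · exact intervalIntegrable_const
  · refine Filter.Eventually.of_forall fun θ _ x hx => ?_
    have hx' : x < 1 := lt_trans hx hm1'
    have hb := base_pos hx' θ
    have h1 : HasDerivAt (fun x : ℝ => 1 - x * Real.sin θ ^ 2) (-(Real.sin θ ^ 2)) x := by
      simpa using ((hasDerivAt_id x).mul_const (Real.sin θ ^ 2)).const_sub 1
    have h2 := (h1.rpow_const (p := s) (Or.inl hb.ne')).const_mul (w θ)
    refine h2.congr_deriv ?_
    ring

noncomputable def kk (m : ℝ) : ℝ :=
  ∫ θ in (0:ℝ)..(Real.pi / 2), (1 - m * Real.sin θ ^ 2) ^ (-(1/2) : ℝ)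

noncomputable def cc (m : ℝ) : ℝ :=
  ∫ θ in (0:ℝ)..(Real.pi / 2), Real.cos θ ^ 2 * (1 - m * Real.sin θ ^ 2) ^ (-(1/2) : ℝ)

noncomputable def pp (m : ℝ) : ℝ := m / 2 * cc m

lemma rpow_half {x : ℝ} (hx : 0 < x) : x ^ (-(1/2) : ℝ) = x * x ^ (-(1/2) - 1 : ℝ) := by
  rw [Real.rpow_sub_one hx.ne']; field_simp

/-- The basic integration by parts identity. -/
lemma ibp {m : ℝ} (hm : m < 1) :
    ∫ θ in (0:ℝ)..(Real.pi / 2), (Real.cos θ ^ 2 - Real.sin θ ^ 2 + m * Real.sin θ ^ 4) *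
      (1 - m * Real.sin θ ^ 2) ^ (-(1/2) - 1 : ℝ) = 0 := by
  have h := intervalIntegral.integral_eq_sub_of_hasDerivAt (a := (0:ℝ)) (b := Real.pi / 2)
    (f := fun θ => Real.sin θ * Real.cos θ * (1 - m * Real.sin θ ^ 2) ^ (-(1/2) : ℝ))
    (f' := fun θ => (Real.cos θ ^ 2 - Real.sin θ ^ 2 + m * Real.sin θ ^ 4) *
      (1 - m * Real.sin θ ^ 2) ^ (-(1/2) - 1 : ℝ)) ?_ ?_
  · rw [h]; simp
  · intro θ _
    have hb := base_pos hm θ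
    have h1 : HasDerivAt (fun θ : ℝ => 1 - m * Real.sin θ ^ 2)
        (-(m * (2 * Real.sin θ * Real.cos θ))) θ := by
      have := (((Real.hasDerivAt_sin θ).pow 2).const_mul m).const_sub 1
      simpa using this
    have h2 := h1.rpow_const (p := (-(1/2) : ℝ)) (Or.inl hb.ne')
    have h3 := ((Real.hasDerivAt_sin θ).mul (Real.hasDerivAt_cos θ)).mul h2
    refine h3.congr_deriv ?_
    simp only [Pi.mul_apply]
    rw [rpow_half hb]
    have hc : Real.cos θ ^ 2 = 1 - Real.sin θ ^ 2 := by rw [Real.cos_sq']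
    linear_combination (0:ℝ) * hc
  · exact (cont_J hm (fun θ => Real.cos θ ^ 2 - Real.sin θ ^ 2 + m * Real.sin θ ^ 4) (by fun_prop)
      (-(1/2) - 1)).intervalIntegrable _ _

lemma deriv_kk {m : ℝ} (hm : m < 1) : HasDerivAt kk (cc m / (2 * (1 - m))) m := by
  have h := deriv_J hm (fun _ => 1) continuous_const (by simp) (-(1/2)) (by norm_num)
  have e : kk = fun x => ∫ θ in (0:ℝ)..(Real.pi / 2), 1 * (1 - x * Real.sin θ ^ 2) ^ (-(1/2) : ℝ) := by
    funext x; simp [kk]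
  rw [e]
  refine h.congr_deriv ?_
  symm
  rw [div_eq_iff (by linarith : 2 * (1 - m) ≠ 0), cc, ← sub_eq_zero, ← intervalIntegral.integral_mul_const,
    ← intervalIntegral.integral_sub]
  · refine Eq.trans ?_ (ibp hm)
    apply intervalIntegral.integral_congr
    intro θ _
    have hb := base_pos hm θ
    have hc : Real.cos θ ^ 2 = 1 - Real.sin θ ^ 2 := by rw [Real.cos_sq']
    simp only
    rw [rpow_half hb, hc]
    ring
  · exact (cont_J hm _ (by fun_prop) _).intervalIntegrable _ _
  · exact ((cont_J hm _ (by fun_prop) _).mul continuous_const).intervalIntegrable _ _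

lemma deriv_pp {m : ℝ} (hm : m < 1) : HasDerivAt pp (kk m / 4) m := by
  have h := deriv_J hm (fun θ => Real.cos θ ^ 2) (by fun_prop)
    (by intro θ; rw [abs_of_nonneg (sq_nonneg _)]; exact Real.cos_sq_le_one θ) (-(1/2)) (by norm_num)
  have h2 := ((hasDerivAt_id m).div_const 2).mul h
  have e : pp = (fun x => id x / 2) * fun x => ∫ θ in (0:ℝ)..(Real.pi / 2),
      Real.cos θ ^ 2 * (1 - x * Real.sin θ ^ 2) ^ (-(1/2) : ℝ) := by
    funext x; simp [pp, cc]
  rw [e]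
  refine h2.congr_deriv ?_
  rw [kk, ← sub_eq_zero, ← intervalIntegral.integral_div, ← intervalIntegral.integral_const_mul,
    ← intervalIntegral.integral_const_mul, ← intervalIntegral.integral_add,
    ← intervalIntegral.integral_sub]
  · refine Eq.trans ?_ (by rw [intervalIntegral.integral_const_mul, ibp hm, mul_zero] :
      (∫ θ in (0:ℝ)..(Real.pi / 2), (1/4) * ((Real.cos θ ^ 2 - Real.sin θ ^ 2 + m * Real.sin θ ^ 4) *
      (1 - m * Real.sin θ ^ 2) ^ (-(1/2) - 1 : ℝ))) = 0)
    apply intervalIntegral.integral_congr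
    intro θ _
    have hb := base_pos hm θ
    have hc : Real.cos θ ^ 2 = 1 - Real.sin θ ^ 2 := by rw [Real.cos_sq']
    simp only [id]
    rw [rpow_half hb, hc]
    ring
  · exact ((continuous_const.mul (cont_J hm _ (by fun_prop) _)).add
      (continuous_const.mul (cont_J hm _ (by fun_prop) _))).intervalIntegrable _ _
  · exact (by simpa using (cont_J hm (fun _ => 1) (by fun_prop) (-(1/2))).div_const 4 : Continuous _).intervalIntegrable _ _
  · exact (continuous_const.mul (cont_J hm _ (by fun_prop) _)).intervalIntegrable _ _
  · exact (continuous_const.mul (cont_J hm _ (by fun_prop) _)).intervalIntegrable _ _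

lemma kk_pos {m : ℝ} (hm : m < 1) : 0 < kk m := by
  apply intervalIntegral.intervalIntegral_pos_of_pos_on
  · exact (by simpa using (cont_J hm (fun _ => 1) (by fun_prop) (-(1/2))) : Continuous _).intervalIntegrable _ _
  · intro θ _
    exact Real.rpow_pos_of_pos (base_pos hm θ) _
  · exact Real.pi_div_two_pos

lemma cc_pos {m : ℝ} (hm : m < 1) : 0 < cc m := by
  apply intervalIntegral.intervalIntegral_pos_of_pos_on
  · exact (cont_J hm _ (by fun_prop) _).intervalIntegrable _ _
  · intro θ hθ
    have := Real.cos_pos_of_mem_Ioo (x := θ) ⟨by linarith [hθ.1, Real.pi_pos], hθ.2⟩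
    exact mul_pos (by positivity) (Real.rpow_pos_of_pos (base_pos hm θ) _)
  · exact Real.pi_div_two_pos

lemma pp_pos {m : ℝ} (h0 : 0 < m) (hm : m < 1) : 0 < pp m :=
  mul_pos (by linarith) (cc_pos hm)

lemma kk_zero : kk 0 = Real.pi / 2 := by simp [kk]

lemma pp_zero : pp 0 = 0 := by simp [pp]

lemma deriv_kk' {m : ℝ} (h0 : 0 < m) (hm : m < 1) : HasDerivAt kk (pp m / (m * (1 - m))) m := by
  refine (deriv_kk hm).congr_deriv ?_
  have : 1 - m ≠ 0 := by linarith
  rw [pp]; field_simp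

lemma pp_le {m : ℝ} (h0 : 0 ≤ m) (hm : m < 1) : pp m ≤ m * kk m / 4 := by
  have hd : ∀ x < (1:ℝ), HasDerivAt (fun x => x * kk x / 4 - pp x) (x * (cc x / (2 * (1 - x))) / 4) x := by
    intro x hx
    refine ((((hasDerivAt_id x).mul (deriv_kk hx)).div_const 4).sub (deriv_pp hx)).congr_deriv ?_
    simp only [id]; ring
  have hmono : MonotoneOn (fun x => x * kk x / 4 - pp x) (Set.Ico 0 1) := by
    apply monotoneOn_of_deriv_nonneg (convex_Ico 0 1)
    · intro x hx; exact (hd x hx.2).continuousAt.continuousWithinAt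
    · intro x hx; rw [interior_Ico] at hx; exact (hd x hx.2).differentiableAt.differentiableWithinAt
    · intro x hx
      rw [interior_Ico] at hx
      rw [(hd x hx.2).deriv]
      have := cc_pos hx.2
      have h1 := hx.1
      have h2 : 0 < 1 - x := by linarith [hx.2]
      positivity
  have := hmono ⟨le_refl 0, one_pos⟩ ⟨h0, hm⟩ h0
  simp [pp_zero] at this
  linarith

lemma cc_ge {m : ℝ} (h0 : 0 ≤ m) (hm : m < 1) : cc 0 ≤ cc m := by
  apply intervalIntegral.integral_mono_on Real.pi_div_two_pos.le
  · exact (cont_J (by norm_num) _ (by fun_prop) _).intervalIntegrable _ _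
  · exact (cont_J hm _ (by fun_prop) _).intervalIntegrable _ _
  · intro θ _
    apply mul_le_mul_of_nonneg_left _ (sq_nonneg _)
    apply Real.rpow_le_rpow_of_nonpos (base_pos hm θ) _ (by norm_num)
    nlinarith [sq_nonneg (Real.sin θ)]

lemma kk_tendsto_atTop : Tendsto kk (nhdsWithin 1 (Set.Iio 1)) atTop := by
  have hd : ∀ x < (1:ℝ), HasDerivAt (fun x => kk x + cc 0 / 2 * Real.log (1 - x))
      ((cc x - cc 0) / (2 * (1 - x))) x := by
    intro x hx
    have hx' : 1 - x ≠ 0 := by linarith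
    have h1 : HasDerivAt (fun x : ℝ => 1 - x) (-1) x := by simpa using (hasDerivAt_id x).const_sub 1
    refine ((deriv_kk hx).add ((h1.log hx').const_mul (cc 0 / 2))).congr_deriv ?_
    field_simp; ring
  have hmono : MonotoneOn (fun x => kk x + cc 0 / 2 * Real.log (1 - x)) (Set.Ico 0 1) := by
    apply monotoneOn_of_deriv_nonneg (convex_Ico 0 1)
    · intro x hx; exact (hd x hx.2).continuousAt.continuousWithinAt
    · intro x hx; rw [interior_Ico] at hx; exact (hd x hx.2).differentiableAt.differentiableWithinAt
    · intro x hx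
      rw [interior_Ico] at hx
      rw [(hd x hx.2).deriv]
      have := cc_ge hx.1.le hx.2
      exact div_nonneg (by linarith) (by linarith [hx.2])
  have hc := cc_pos (m := 0) (by norm_num)
  have hlim : Tendsto (fun x : ℝ => kk 0 + cc 0 / 2 * (-Real.log (1 - x))) (nhdsWithin 1 (Set.Iio 1)) atTop := by
    apply tendsto_atTop_add_const_left
    apply Tendsto.const_mul_atTop (by positivity)
    apply tendsto_neg_atBot_atTop.comp
    apply Real.tendsto_log_nhdsGT_zero.comp
    rw [tendsto_nhdsWithin_iff]
    constructor
    · have : Tendsto (fun x : ℝ => 1 - x) (nhds 1) (nhds (1 - 1)) := (continuous_const.sub continuous_id).tendsto 1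
      rw [sub_self] at this
      exact this.mono_left nhdsWithin_le_nhds
    · filter_upwards [self_mem_nhdsWithin] with x hx
      simpa using hx
  apply tendsto_atTop_mono' _ _ hlim
  have : Set.Ioo (0:ℝ) 1 ∈ nhdsWithin (1:ℝ) (Set.Iio 1) := Ioo_mem_nhdsLT one_pos
  filter_upwards [this] with x hx
  have := hmono ⟨le_refl 0, one_pos⟩ ⟨hx.1.le, hx.2⟩ hx.1.le
  simp at this
  linarith

lemma cc_tendsto_one : Tendsto cc (nhdsWithin 1 (Set.Iio 1)) (nhds 1) := by
  have h1 : (1:ℝ) = ∫ θ in (0:ℝ)..(Real.pi / 2), Real.cos θ := by simp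
  conv => rhs; rw [h1]
  have hIoo : Set.Ioo (0:ℝ) 1 ∈ nhdsWithin (1:ℝ) (Set.Iio 1) := Ioo_mem_nhdsLT one_pos
  unfold cc
  apply intervalIntegral.tendsto_integral_filter_of_dominated_convergence (fun _ => (1:ℝ))
  · filter_upwards [hIoo] with m hm
    exact (cont_J hm.2 _ (by fun_prop) _).aestronglyMeasurable
  · filter_upwards [hIoo] with m hm
    refine Filter.Eventually.of_forall fun θ _ => ?_
    have hb := base_pos hm.2 θ
    have hp : 0 < (1 - m * Real.sin θ ^ 2) ^ (-(1/2) : ℝ) := Real.rpow_pos_of_pos hb _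
    rw [Real.norm_eq_abs, abs_of_nonneg (by positivity)]
    by_cases hc : Real.cos θ = 0
    · rw [hc]; simp
    · have hc2 : 0 < Real.cos θ ^ 2 := by positivity
      have hle : Real.cos θ ^ 2 ≤ 1 - m * Real.sin θ ^ 2 := by
        rw [Real.cos_sq']; nlinarith [sq_nonneg (Real.sin θ), hm.2]
      have := Real.rpow_le_rpow_of_nonpos hc2 hle (by norm_num : -(1/2:ℝ) ≤ 0)
      calc _ ≤ Real.cos θ ^ 2 * (Real.cos θ ^ 2) ^ (-(1/2) : ℝ) := by gcongr
        _ = (Real.cos θ ^ 2) ^ (1 + -(1/2) : ℝ) := by rw [Real.rpow_add hc2, Real.rpow_one]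
        _ ≤ 1 := Real.rpow_le_one hc2.le (Real.cos_sq_le_one θ) (by norm_num)
  · exact intervalIntegrable_const
  · refine Filter.Eventually.of_forall fun θ hθ => ?_
    rw [Set.uIoc_of_le Real.pi_div_two_pos.le] at hθ
    have hcn : 0 ≤ Real.cos θ := Real.cos_nonneg_of_mem_Icc ⟨by linarith [hθ.1, Real.pi_pos], hθ.2⟩
    by_cases hc : Real.cos θ = 0
    · rw [hc]; simp
    · have hc2 : 0 < Real.cos θ ^ 2 := by positivity
      have e : Real.cos θ = Real.cos θ ^ 2 * (1 - 1 * Real.sin θ ^ 2) ^ (-(1/2) : ℝ) := by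
        rw [one_mul, ← Real.cos_sq']
        rw [← Real.rpow_natCast, ← Real.rpow_mul hcn]
        norm_num
        rw [Real.rpow_neg_one]
        field_simp
      conv => rhs; rw [e]
      have hcont : ContinuousAt (fun m : ℝ => Real.cos θ ^ 2 * (1 - m * Real.sin θ ^ 2) ^ (-(1/2) : ℝ)) 1 := by
        apply ContinuousAt.mul continuousAt_const
        apply ContinuousAt.rpow_const (by fun_prop)
        left
        rw [one_mul, ← Real.cos_sq']
        exact hc2.ne'
      exact hcont.tendsto.mono_left nhdsWithin_le_nhds

lemma kk_one_sub_le {m : ℝ} (h0 : 0 < m) (hm : m < 1) : kk (1 - m) ≤ Real.pi / 2 * m ^ (-(1/2) : ℝ) := by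
  have : ∫ θ in (0:ℝ)..(Real.pi / 2), m ^ (-(1/2) : ℝ) = Real.pi / 2 * m ^ (-(1/2) : ℝ) := by simp
  rw [← this]
  apply intervalIntegral.integral_mono_on Real.pi_div_two_pos.le
  · exact (by simpa using (cont_J (m := 1 - m) (by linarith) (fun _ => 1) (by fun_prop) (-(1/2))) : Continuous _).intervalIntegrable _ _
  · exact intervalIntegrable_const
  · intro θ _
    apply Real.rpow_le_rpow_of_nonpos h0 _ (by norm_num)
    nlinarith [Real.sin_sq_le_one θ, sq_nonneg (Real.sin θ)]

lemma tendsto_one_sub : Tendsto (fun x : ℝ => 1 - x) (nhdsWithin 0 (Set.Ioi 0)) (nhdsWithin 1 (Set.Iio 1)) := by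
  rw [tendsto_nhdsWithin_iff]
  constructor
  · have : Tendsto (fun x : ℝ => 1 - x) (nhds 0) (nhds (1 - 0)) := (continuous_const.sub continuous_id).tendsto 0
    rw [sub_zero] at this
    exact this.mono_left nhdsWithin_le_nhds
  · filter_upwards [self_mem_nhdsWithin] with x hx
    simpa using hx

lemma deriv_rev {f : ℝ → ℝ} {f' m : ℝ} (h : HasDerivAt f f' (1 - m)) :
    HasDerivAt (fun x => f (1 - x)) (-f') m := by
  have h1 : HasDerivAt (fun x : ℝ => 1 - x) (-1) m := by simpa using (hasDerivAt_id m).const_sub 1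
  have := h.comp m h1
  simpa [Function.comp_def] using this

lemma legendre {m : ℝ} (hm : m ∈ Set.Ioo (0:ℝ) 1) :
    pp m * kk (1 - m) + pp (1 - m) * kk m = Real.pi / 4 := by
  have hd : ∀ x ∈ Set.Ioo (0:ℝ) 1, HasDerivAt (fun x => pp x * kk (1 - x) + pp (1 - x) * kk x) 0 x := by
    intro x hx
    have h1 : 0 < 1 - x := by linarith [hx.2]
    have h2 : 1 - x < 1 := by linarith [hx.1]
    refine (((deriv_pp hx.2).mul (deriv_rev (deriv_kk' h1 h2))).add
      ((deriv_rev (deriv_pp h2)).mul (deriv_kk' hx.1 hx.2))).congr_deriv ?_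
    have := hx.1.ne'
    rw [sub_sub_cancel]
    field_simp
    ring
  have hconst : ∀ x ∈ Set.Ioo (0:ℝ) 1, pp x * kk (1 - x) + pp (1 - x) * kk x =
      pp m * kk (1 - m) + pp (1 - m) * kk m := by
    intro x hx
    exact isOpen_Ioo.is_const_of_deriv_eq_zero isPreconnected_Ioo
      (fun y hy => (hd y hy).differentiableAt.differentiableWithinAt)
      (fun y hy => (hd y hy).deriv) hx hm
  have hIoo : Set.Ioo (0:ℝ) 1 ∈ nhdsWithin (0:ℝ) (Set.Ioi 0) := Ioo_mem_nhdsGT one_pos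
  have hl1 : Tendsto (fun x => pp x * kk (1 - x) + pp (1 - x) * kk x) (nhdsWithin 0 (Set.Ioi 0))
      (nhds (pp m * kk (1 - m) + pp (1 - m) * kk m)) := by
    apply tendsto_const_nhds.congr'
    filter_upwards [hIoo] with x hx
    exact (hconst x hx).symm
  have hk0 : Tendsto kk (nhdsWithin 0 (Set.Ioi 0)) (nhds (Real.pi / 2)) := by
    rw [← kk_zero]
    exact (deriv_kk (by norm_num : (0:ℝ) < 1)).continuousAt.tendsto.mono_left nhdsWithin_le_nhds
  have hA : Tendsto (fun x => pp x * kk (1 - x)) (nhdsWithin 0 (Set.Ioi 0)) (nhds 0) := by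
    have hs : Tendsto (fun x : ℝ => x ^ (1/2 : ℝ)) (nhdsWithin 0 (Set.Ioi 0)) (nhds 0) := by
      have : ContinuousAt (fun x : ℝ => x ^ (1/2 : ℝ)) 0 :=
        Real.continuousAt_rpow_const _ _ (Or.inr (by norm_num))
      have h := this.tendsto
      rw [Real.zero_rpow (by norm_num)] at h
      exact h.mono_left nhdsWithin_le_nhds
    have hub := (hs.mul hk0).const_mul (Real.pi / 8)
    rw [zero_mul, mul_zero] at hub
    apply tendsto_of_tendsto_of_tendsto_of_le_of_le' tendsto_const_nhds hub
    · filter_upwards [hIoo] with x hx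
      exact (mul_pos (pp_pos hx.1 hx.2) (kk_pos (by linarith [hx.1]))).le
    · filter_upwards [hIoo] with x hx
      have e : x ^ (1/2 : ℝ) = x * x ^ (-(1/2) : ℝ) := by
        rw [← Real.rpow_one_add' hx.1.le (by norm_num)]; norm_num
      calc _ ≤ (x * kk x / 4) * (Real.pi / 2 * x ^ (-(1/2) : ℝ)) :=
            mul_le_mul (pp_le hx.1.le hx.2) (kk_one_sub_le hx.1 hx.2) (kk_pos (by linarith [hx.1])).le
              (by have := kk_pos hx.2; have := hx.1; positivity)
        _ = _ := by rw [e]; ring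
  have hB : Tendsto (fun x => pp (1 - x) * kk x) (nhdsWithin 0 (Set.Ioi 0)) (nhds ((1 / 2 * 1) * (Real.pi / 2))) := by
    apply Tendsto.mul _ hk0
    apply Tendsto.mul _ (cc_tendsto_one.comp tendsto_one_sub)
    exact (tendsto_one_sub.mono_right nhdsWithin_le_nhds).div_const 2
  have := tendsto_nhds_unique hl1 (hA.add hB)
  rw [this]; ring

lemma strictMonoOn_of_hasDeriv {D : Set ℝ} (hD : Convex ℝ D) {f f' : ℝ → ℝ}
    (hd : ∀ x ∈ D, HasDerivAt f (f' x) x) (hp : ∀ x ∈ interior D, 0 < f' x) : StrictMonoOn f D := by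
  apply strictMonoOn_of_deriv_pos hD
  · intro x hx; exact (hd x hx).continuousAt.continuousWithinAt
  · intro x hx; rw [(hd x (interior_subset hx)).deriv]; exact hp x hx

noncomputable def phi (m : ℝ) : ℝ := kk m / kk (1 - m)

lemma phi_pos {m : ℝ} (hm : m ∈ Set.Ioo (0:ℝ) 1) : 0 < phi m :=
  div_pos (kk_pos hm.2) (kk_pos (by linarith [hm.1]))

lemma phi_half : phi (1 / 2) = 1 := by
  have := kk_pos (m := 1/2) (by norm_num)
  rw [phi]; norm_num at *; exact this.ne'

lemma deriv_phi {m : ℝ} (hm : m ∈ Set.Ioo (0:ℝ) 1) :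
    HasDerivAt phi (Real.pi / (4 * m * (1 - m) * kk (1 - m) ^ 2)) m := by
  have h1 : 0 < 1 - m := by linarith [hm.2]
  have h2 : 1 - m < 1 := by linarith [hm.1]
  have hk := kk_pos h2
  have hm0 := hm.1
  refine ((deriv_kk' hm.1 hm.2).div (deriv_rev (deriv_kk' h1 h2)) hk.ne').congr_deriv ?_
  have hl := legendre hm
  have : Real.pi = 4 * (pp m * kk (1 - m) + pp (1 - m) * kk m) := by linarith
  rw [this, sub_sub_cancel]
  field_simp
  ring

lemma phi_strictMono : StrictMonoOn phi (Set.Ioo 0 1) := by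
  apply strictMonoOn_of_hasDeriv (convex_Ioo 0 1) (fun x hx => deriv_phi hx)
  intro x hx
  rw [interior_Ioo] at hx
  have h1 : 0 < 1 - x := by linarith [hx.2]
  have h2 := kk_pos (m := 1 - x) (by linarith [hx.1])
  have := hx.1
  have := Real.pi_pos
  positivity

lemma tendsto_one_sub' : Tendsto (fun x : ℝ => 1 - x) (nhdsWithin 1 (Set.Iio 1)) (nhds 0) := by
  have : Tendsto (fun x : ℝ => 1 - x) (nhds 1) (nhds (1 - 1)) := (continuous_const.sub continuous_id).tendsto 1
  rw [sub_self] at this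
  exact this.mono_left nhdsWithin_le_nhds

lemma kk_rev_tendsto : Tendsto (fun x => kk (1 - x)) (nhdsWithin 1 (Set.Iio 1)) (nhds (Real.pi / 2)) := by
  rw [← kk_zero]
  exact (deriv_kk (by norm_num : (0:ℝ) < 1)).continuousAt.tendsto.comp tendsto_one_sub'

lemma phi_tendsto : Tendsto phi (nhdsWithin 1 (Set.Iio 1)) atTop := by
  have := kk_tendsto_atTop.atTop_mul_pos (C := (Real.pi/2)⁻¹) (by positivity)
    (kk_rev_tendsto.inv₀ (by positivity))
  exact this

lemma Q_strictAnti : StrictAntiOn (fun m => pp (1 - m) * kk m ^ 3) (Set.Ioo 0 1) := by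
  have hd : ∀ x ∈ Set.Ioo (0:ℝ) 1, HasDerivAt (fun m => -(pp (1 - m) * kk m ^ 3))
      (kk x ^ 2 * (kk (1 - x) * kk x * (x * (1 - x)) - 12 * pp (1 - x) * pp x) / (4 * x * (1 - x))) x := by
    intro x hx
    have h1 : 0 < 1 - x := by linarith [hx.2]
    have h2 : 1 - x < 1 := by linarith [hx.1]
    have := hx.1
    refine ((deriv_rev (deriv_pp h2)).mul ((deriv_kk' hx.1 hx.2).pow 3)).neg.congr_deriv ?_
    simp only [Pi.pow_apply]
    field_simp
    push_cast
    ring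
  have := strictMonoOn_of_hasDeriv (convex_Ioo 0 1) hd ?_
  · intro x hx y hy hxy
    have := this hx hy hxy
    simp only at this ⊢
    linarith
  · intro x hx
    rw [interior_Ioo] at hx
    have h1 : 0 < 1 - x := by linarith [hx.2]
    have h2 : 1 - x < 1 := by linarith [hx.1]
    have h0 := hx.1
    have hk := kk_pos hx.2
    have hk' := kk_pos h2
    have a1 := pp_le hx.1.le hx.2
    have a2 := pp_le h1.le h2
    have hp := pp_pos hx.1 hx.2
    have hp' := pp_pos h1 h2
    have a3 := mul_le_mul a1 a2 hp'.le (by positivity)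
    have a4 : 0 < kk (1 - x) * kk x * (x * (1 - x)) := by positivity
    have : 0 < kk (1 - x) * kk x * (x * (1 - x)) - 12 * pp (1 - x) * pp x := by nlinarith
    positivity

noncomputable def bb : ℝ := 2 / Real.pi * kk (1/2) ^ 2

lemma bb_pos : 0 < bb := by
  have := kk_pos (m := 1/2) (by norm_num)
  have := Real.pi_pos
  unfold bb; positivity

noncomputable def FF (m : ℝ) : ℝ := 4 / Real.pi * kk (1 - m) ^ 2 - bb * (1 / phi m ^ 2) - bb

lemma FF_half : FF (1/2) = 0 := by
  rw [FF, phi_half, bb]; norm_num; ring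

lemma deriv_FF {m : ℝ} (hm : m ∈ Set.Ioo (0:ℝ) 1) :
    HasDerivAt FF (kk (1 - m) / (m * (1 - m)) * (bb * Real.pi / 2 / kk m ^ 3 - 8 / Real.pi * pp (1 - m))) m := by
  have h1 : 0 < 1 - m := by linarith [hm.2]
  have h2 : 1 - m < 1 := by linarith [hm.1]
  have hk := kk_pos hm.2
  have hk' := kk_pos h2
  have h0 := hm.1
  have hpi := Real.pi_pos
  have d1 := ((deriv_rev (deriv_kk' h1 h2)).pow 2).const_mul (4 / Real.pi)
  have d2 := ((((deriv_phi hm).pow 2).inv (pow_pos (phi_pos hm) 2).ne')).const_mul bb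
  have d := (d1.sub d2).sub_const bb
  have e : FF = fun x => 4 / Real.pi * kk (1 - x) ^ 2 - bb * (phi x ^ 2)⁻¹ - bb := by
    funext x; simp [FF]
  rw [e]
  refine d.congr_deriv ?_
  simp only [Pi.pow_apply, phi]
  rw [sub_sub_cancel]
  norm_num only [pow_one, Nat.cast_ofNat]
  field_simp
  ring

lemma dFF_pos {m : ℝ} (hm : m ∈ Set.Ioo (1/2:ℝ) 1) :
    0 < kk (1 - m) / (m * (1 - m)) * (bb * Real.pi / 2 / kk m ^ 3 - 8 / Real.pi * pp (1 - m)) := by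
  have h0 : 0 < m := by linarith [hm.1]
  have h1 : 0 < 1 - m := by linarith [hm.2]
  have h2 : 1 - m < 1 := by linarith
  have hk := kk_pos hm.2
  have hk' := kk_pos h2
  have hpi := Real.pi_pos
  have hQ := Q_strictAnti (show (1/2:ℝ) ∈ Set.Ioo (0:ℝ) 1 by norm_num) ⟨h0, hm.2⟩ hm.1
  have hl := legendre (m := 1/2) (by norm_num)
  have e2 : (1:ℝ) - 1/2 = 1/2 := by norm_num
  simp only [e2] at hQ hl
  have e : pp (1/2) * kk (1/2) ^ 3 = bb * Real.pi ^ 2 / 16 := by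
    have : pp (1/2) * kk (1/2) = Real.pi / 8 := by linarith
    have e3 : pp (1/2) * kk (1/2) ^ 3 = (pp (1/2) * kk (1/2)) * kk (1/2) ^ 2 := by ring
    rw [e3, this, bb]
    generalize kk (1/2) = k
    field_simp
    ring
  rw [e] at hQ
  have : 0 < bb * Real.pi / 2 / kk m ^ 3 - 8 / Real.pi * pp (1 - m) := by
    have : bb * Real.pi / 2 / kk m ^ 3 - 8 / Real.pi * pp (1 - m) =
      8 / (Real.pi * kk m ^ 3) * (bb * Real.pi ^ 2 / 16 - pp (1 - m) * kk m ^ 3) := by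
      field_simp; ring
    rw [this]
    exact mul_pos (by positivity) (by linarith)
  positivity

lemma FF_strictMono : StrictMonoOn FF (Set.Ico (1/2) 1) := by
  apply strictMonoOn_of_hasDeriv (convex_Ico _ _) (fun x hx => deriv_FF ⟨by linarith [hx.1], hx.2⟩)
  intro m hm
  rw [interior_Ico] at hm
  exact dFF_pos hm

lemma FF_tendsto : Tendsto FF (nhdsWithin 1 (Set.Iio 1)) (nhds (Real.pi - bb)) := by
  have h1 := (kk_rev_tendsto.pow 2).const_mul (4 / Real.pi)
  have h2 : Tendsto (fun m => 1 / phi m ^ 2) (nhdsWithin 1 (Set.Iio 1)) (nhds 0) := by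
    simp only [one_div]
    exact (((tendsto_pow_atTop two_ne_zero).comp phi_tendsto)).inv_tendsto_atTop
  have h := (h1.sub (h2.const_mul bb)).sub_const bb
  have e : 4 / Real.pi * (Real.pi / 2) ^ 2 - bb * 0 - bb = Real.pi - bb := by
    have := Real.pi_pos.ne'
    field_simp; ring
  rw [e] at h
  exact h

lemma FF_lt {m : ℝ} (hm : m ∈ Set.Ico (1/2:ℝ) 1) : FF m < Real.pi - bb := by
  obtain ⟨x, hx1, hx2⟩ := exists_between hm.2
  have hx : x ∈ Set.Ico (1/2:ℝ) 1 := ⟨by linarith [hm.1], hx2⟩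
  apply lt_of_lt_of_le (FF_strictMono hm hx hx1)
  apply ge_of_tendsto FF_tendsto
  filter_upwards [Ioo_mem_nhdsLT hx2] with y hy
  exact (FF_strictMono hx ⟨by linarith [hx.1, hy.1], hy.2⟩ hy.1).le

noncomputable def HH (m : ℝ) : ℝ := Real.log (m / (1 - m)) + bb * (1 / phi m - phi m)

lemma HH_half : HH (1/2) = 0 := by
  rw [HH, phi_half]; norm_num

lemma deriv_HH {m : ℝ} (hm : m ∈ Set.Ioo (0:ℝ) 1) :
    HasDerivAt HH (FF m * (Real.pi / (4 * m * (1 - m) * kk (1 - m) ^ 2))) m := by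
  have h1 : 0 < 1 - m := by linarith [hm.2]
  have h2 : 1 - m < 1 := by linarith [hm.1]
  have hk' := kk_pos h2
  have h0 := hm.1
  have hpi := Real.pi_pos
  have hphi := phi_pos hm
  have d0 : HasDerivAt (fun x : ℝ => 1 - x) (-1) m := by simpa using (hasDerivAt_id m).const_sub 1
  have d1 := ((hasDerivAt_id m).div d0 h1.ne').log (div_pos h0 h1).ne'
  have d2 := (((deriv_phi hm).inv hphi.ne').sub (deriv_phi hm)).const_mul bb
  have e : HH = fun x => Real.log (id x / (1 - x)) + bb * ((phi x)⁻¹ - phi x) := by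
    funext x; simp [HH]
  rw [e]
  refine (d1.add d2).congr_deriv ?_
  simp only [id, Pi.div_apply, FF]
  field_simp
  ring

lemma FF_pos {m : ℝ} (hm : m ∈ Set.Ioo (1/2:ℝ) 1) : 0 < FF m := by
  rw [← FF_half]
  exact FF_strictMono ⟨le_refl _, by norm_num⟩ ⟨hm.1.le, hm.2⟩ hm.1

lemma phi_gt_one {m : ℝ} (hm : m ∈ Set.Ioo (1/2:ℝ) 1) : 1 < phi m := by
  rw [← phi_half]
  exact phi_strictMono (by norm_num) ⟨by linarith [hm.1], hm.2⟩ hm.1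

lemma dphi_pos {m : ℝ} (hm : m ∈ Set.Ioo (0:ℝ) 1) :
    0 < Real.pi / (4 * m * (1 - m) * kk (1 - m) ^ 2) := by
  have h1 : 0 < 1 - m := by linarith [hm.2]
  have h2 := kk_pos (m := 1 - m) (by linarith [hm.1])
  have := hm.1
  have := Real.pi_pos
  positivity

lemma HH_pos {m : ℝ} (hm : m ∈ Set.Ioo (1/2:ℝ) 1) : 0 < HH m := by
  have : StrictMonoOn HH (Set.Ico (1/2) 1) := by
    apply strictMonoOn_of_hasDeriv (convex_Ico _ _) (fun x hx => deriv_HH ⟨by linarith [hx.1], hx.2⟩)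
    intro x hx
    rw [interior_Ico] at hx
    exact mul_pos (FF_pos hx) (dphi_pos ⟨by linarith [hx.1], hx.2⟩)
  rw [← HH_half]
  exact this ⟨le_refl _, by norm_num⟩ ⟨hm.1.le, hm.2⟩ hm.1

lemma HH_lt {m : ℝ} (hm : m ∈ Set.Ioo (1/2:ℝ) 1) : HH m < FF m * (phi m - 1) := by
  have : StrictMonoOn (fun m => FF m * (phi m - 1) - HH m) (Set.Ico (1/2) 1) := by
    apply strictMonoOn_of_hasDeriv (convex_Ico _ _) (f' := fun m => (kk (1 - m) / (m * (1 - m)) * (bb * Real.pi / 2 / kk m ^ 3 - 8 / Real.pi * pp (1 - m))) * (phi m - 1))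
    · intro x hx
      have hx' : x ∈ Set.Ioo (0:ℝ) 1 := ⟨by linarith [hx.1], hx.2⟩
      refine (((deriv_FF hx').mul ((deriv_phi hx').sub_const 1)).sub (deriv_HH hx')).congr_deriv ?_
      ring
    · intro x hx
      rw [interior_Ico] at hx
      apply mul_pos _ (by linarith [phi_gt_one hx])
      exact dFF_pos hx
  have := this ⟨le_refl _, by norm_num⟩ ⟨hm.1.le, hm.2⟩ hm.1
  simp only [HH_half, FF_half] at this
  linarith

lemma GG_strictMono : StrictMonoOn (fun m => HH m / (phi m - 1)) (Set.Ioo (1/2) 1) := by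
  apply strictMonoOn_of_hasDeriv (convex_Ioo _ _) (f' := fun m =>
    (Real.pi / (4 * m * (1 - m) * kk (1 - m) ^ 2)) * (FF m * (phi m - 1) - HH m) / (phi m - 1) ^ 2)
  · intro x hx
    have hx' : x ∈ Set.Ioo (0:ℝ) 1 := ⟨by linarith [hx.1], hx.2⟩
    have h1 := phi_gt_one hx
    refine ((deriv_HH hx').div ((deriv_phi hx').sub_const 1) (by linarith : phi x - 1 ≠ 0)).congr_deriv ?_
    ring
  · intro x hx
    rw [interior_Ioo] at hx
    have h1 := phi_gt_one hx
    have h2 := HH_lt hx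
    exact div_pos (mul_pos (dphi_pos ⟨by linarith [hx.1], hx.2⟩) (by linarith)) (pow_pos (by linarith) 2)

lemma GG_image : (fun m => HH m / (phi m - 1)) '' Set.Ioo (1/2) 1 = Set.Ioo 0 (Real.pi - bb) := by
  apply Set.Subset.antisymm
  · rintro _ ⟨m, hm, rfl⟩
    have h1 := phi_gt_one hm
    have h2 := HH_lt hm
    refine ⟨div_pos (HH_pos hm) (by linarith), ?_⟩
    simp only
    rw [div_lt_iff₀ (by linarith)]
    have := FF_lt ⟨hm.1.le, hm.2⟩
    nlinarith
  · rintro y ⟨hy0, hy1⟩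
    have hcont : ContinuousOn (fun m => HH m / (phi m - 1)) (Set.Ioo (1/2) 1) := by
      intro x hx
      have hx' : x ∈ Set.Ioo (0:ℝ) 1 := ⟨by linarith [hx.1], hx.2⟩
      have h1 := phi_gt_one hx
      exact ((deriv_HH hx').continuousAt.div ((deriv_phi hx').continuousAt.sub continuousAt_const)
        (by linarith : phi x - 1 ≠ 0)).continuousWithinAt
    have hlow : ∃ x ∈ Set.Ioo (1/2:ℝ) 1, HH x / (phi x - 1) < y := by
      have hc := (deriv_FF (m := 1/2) (by norm_num)).continuousAt.tendsto
      rw [FF_half] at hc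
      have hc2 := (hc.mono_left (nhdsWithin_le_nhds (s := Set.Ioi (1/2)))).eventually (gt_mem_nhds hy0)
      obtain ⟨x, hx1, hx2⟩ := (hc2.and (Ioo_mem_nhdsGT (by norm_num : (1/2:ℝ) < 1))).exists
      refine ⟨x, hx2, ?_⟩
      have h1 := phi_gt_one hx2
      have h2 := HH_lt hx2
      rw [div_lt_iff₀ (by linarith)]
      nlinarith
    have hhigh : ∃ x ∈ Set.Ioo (1/2:ℝ) 1, y < HH x / (phi x - 1) := by
      obtain ⟨z, hz1, hz2⟩ := ((FF_tendsto.eventually (lt_mem_nhds hy1)).and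
        (Ioo_mem_nhdsLT (by norm_num : (1/2:ℝ) < 1))).exists
      have hmono : MonotoneOn (fun m => HH m - FF z * phi m) (Set.Ico z 1) := by
        apply StrictMonoOn.monotoneOn
        apply strictMonoOn_of_hasDeriv (convex_Ico _ _) (f' := fun m =>
          (FF m - FF z) * (Real.pi / (4 * m * (1 - m) * kk (1 - m) ^ 2)))
        · intro x hx
          have hx' : x ∈ Set.Ioo (0:ℝ) 1 := ⟨by linarith [hx.1, hz2.1], hx.2⟩
          refine ((deriv_HH hx').sub ((deriv_phi hx').const_mul (FF z))).congr_deriv ?_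
          ring
        · intro x hx
          rw [interior_Ico] at hx
          have := FF_strictMono ⟨hz2.1.le, hz2.2⟩ ⟨by linarith [hz2.1, hx.1], hx.2⟩ hx.1
          exact mul_pos (by linarith) (dphi_pos ⟨by linarith [hx.1, hz2.1], hx.2⟩)
      obtain ⟨x, hx1, hx2⟩ := ((phi_tendsto.eventually (eventually_gt_atTop (FF z * phi z / (FF z - y)))).and
        (Ioo_mem_nhdsLT hz2.2)).exists
      have hx3 : x ∈ Set.Ioo (1/2:ℝ) 1 := ⟨by linarith [hz2.1, hx2.1], hx2.2⟩
      refine ⟨x, hx3, ?_⟩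
      have h1 := phi_gt_one hx3
      rw [lt_div_iff₀ (by linarith)]
      have h2 := hmono ⟨le_refl z, hz2.2⟩ ⟨hx2.1.le, hx2.2⟩ hx2.1.le
      have h3 := HH_pos hz2
      simp only at h2
      rw [div_lt_iff₀ (by linarith)] at hx1
      nlinarith
    obtain ⟨x1, hx1, h1⟩ := hlow
    obtain ⟨x2, hx2, h2⟩ := hhigh
    exact isPreconnected_Ioo.intermediate_value hx1 hx2 hcont ⟨h1.le, h2.le⟩

lemma phi_surj {K : ℝ} (hK : 1 < K) : ∃ m ∈ Set.Ioo (1/2:ℝ) 1, phi m = K := by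
  obtain ⟨x, hx1, hx2⟩ := ((phi_tendsto.eventually (eventually_gt_atTop K)).and
        (Ioo_mem_nhdsLT (by norm_num : (1/2:ℝ) < 1))).exists
  have hcont : ContinuousOn phi (Set.Icc (1/2) x) := fun y hy =>
    (deriv_phi ⟨by linarith [hy.1], by linarith [hy.2, hx2.2]⟩).continuousAt.continuousWithinAt
  obtain ⟨m, hm, rfl⟩ := intermediate_value_Ioo hx2.1.le hcont ⟨by rw [phi_half]; exact hK, hx1⟩
  exact ⟨m, ⟨hm.1, by linarith [hm.2, hx2.2]⟩, rfl⟩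

lemma ellK_sqrt {m : ℝ} (hm : 0 ≤ m) : ellK (Real.sqrt m) = kk m := by
  rw [ellK, Real.sq_sqrt hm, kk]

theorem stmt_5 (lam : ℝ → ℝ)
    (hlam : ∀ K : ℝ, 0 < K → ∀ r ∈ Set.Ioo (0:ℝ) 1,
      mu r = Real.pi / (2 * K) → lam K = r ^ 2 / (1 - r ^ 2)) (a b : ℝ)
    (ha : a = 4 / Real.pi * ellK (1 / Real.sqrt 2) ^ 2) (hb : b = a / 2) (g : ℝ → ℝ)
    (hg : g = fun K : ℝ => 1 / (K - 1) * Real.log (lam K * Real.exp (b * (1 / K - K)))) :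
    StrictMonoOn g (Set.Ioi 1) ∧
    Filter.Tendsto g (nhdsWithin 1 (Set.Ioi 1)) (nhds 0) ∧
    Filter.Tendsto g Filter.atTop (nhds (Real.pi - b)) ∧
    g '' Set.Ioi 1 = Set.Ioo 0 (Real.pi - b) := by
  have hbb : b = bb := by
    have e : 1 / Real.sqrt 2 = Real.sqrt (1/2) := by
      rw [Real.sqrt_div zero_le_one, Real.sqrt_one]
    rw [hb, ha, e, ellK_sqrt (by norm_num), bb]; ring
  have hgphi : ∀ m ∈ Set.Ioo (1/2:ℝ) 1, g (phi m) = HH m / (phi m - 1) := by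
    intro m hm
    have h0 : 0 < m := by linarith [hm.1]
    have h1 : 0 < 1 - m := by linarith [hm.2]
    have hphi := phi_gt_one hm
    have hk := kk_pos hm.2
    have hk' := kk_pos (m := 1 - m) (by linarith)
    have hl := hlam (phi m) (by linarith) (Real.sqrt m)
      ⟨Real.sqrt_pos.2 h0, by rw [Real.sqrt_lt' one_pos]; linarith [hm.2]⟩ (by
        rw [mu, Real.sq_sqrt h0.le, ellK_sqrt h0.le, ellK_sqrt h1.le, phi]
        field_simp)
    rw [Real.sq_sqrt h0.le] at hl
    rw [hg]
    simp only
    rw [hl, Real.log_mul (div_pos h0 h1).ne' (Real.exp_ne_zero _), Real.log_exp, HH, hbb]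
    ring
  have hmono : StrictMonoOn g (Set.Ioi 1) := by
    intro x hx y hy hxy
    obtain ⟨m, hm, rfl⟩ := phi_surj hx
    obtain ⟨n, hn, rfl⟩ := phi_surj hy
    rw [hgphi m hm, hgphi n hn]
    apply GG_strictMono hm hn
    exact (phi_strictMono.lt_iff_lt ⟨by linarith [hm.1], hm.2⟩ ⟨by linarith [hn.1], hn.2⟩).1 hxy
  have himg : g '' Set.Ioi 1 = Set.Ioo 0 (Real.pi - b) := by
    rw [hbb, ← GG_image]
    ext y
    constructor
    · rintro ⟨x, hx, rfl⟩
      obtain ⟨m, hm, rfl⟩ := phi_surj hx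
      exact ⟨m, hm, (hgphi m hm).symm⟩
    · rintro ⟨m, hm, rfl⟩
      exact ⟨phi m, phi_gt_one hm, hgphi m hm⟩
  have hpos : 0 < Real.pi - b := by
    have : g 2 ∈ Set.Ioo 0 (Real.pi - b) := himg ▸ ⟨2, by norm_num, rfl⟩
    linarith [this.1, this.2]
  have hmem : ∀ x, 1 < x → g x ∈ Set.Ioo 0 (Real.pi - b) := fun x hx => himg ▸ ⟨x, hx, rfl⟩
  refine ⟨hmono, ?_, ?_, himg⟩
  · rw [tendsto_order]
    constructor
    · intro c hc
      filter_upwards [self_mem_nhdsWithin] with x hx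
      exact hc.trans (hmem x hx).1
    · intro c hc
      have : min c (Real.pi - b) / 2 ∈ Set.Ioo 0 (Real.pi - b) :=
        ⟨by positivity, by have := min_le_right c (Real.pi - b); linarith⟩
      rw [← himg] at this
      obtain ⟨z, hz, hzc⟩ := this
      have hzc' : g z < c := by
        rw [hzc]; have := min_le_left c (Real.pi - b); have : 0 < min c (Real.pi - b) := by positivity
        linarith
      filter_upwards [Ioo_mem_nhdsGT hz] with x hx
      exact (hmono hx.1 hz hx.2).trans hzc'
  · rw [tendsto_order]
    constructor
    · intro c hc
      have h1 : max c 0 < Real.pi - b := max_lt hc hpos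
      obtain ⟨y, hy1, hy2⟩ := exists_between h1
      have : y ∈ Set.Ioo 0 (Real.pi - b) := ⟨lt_of_le_of_lt (le_max_right c 0) hy1, hy2⟩
      rw [← himg] at this
      obtain ⟨z, hz, hzc⟩ := this
      have hzc' : c < g z := by
        rw [hzc]; exact lt_of_le_of_lt (le_max_left c 0) hy1
      filter_upwards [eventually_gt_atTop z] with x hx
      exact hzc'.trans (hmono hz (lt_trans hz hx) hx)
    · intro c hc
      filter_upwards [eventually_gt_atTop 1] with x hx
      exact (hmem x hx).2.trans hc
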